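/- Let n ≥ 3 and let f : F_2^n → {0,1} satisfy f̂(0) = 1/4 and every other Fourier coefficient equal to 0 or ±1/8. Then f is the indicator function of a disjoint union of two affine subspaces of F_2^n, each of dimension n−3. -/

import Mathlib

open Finset

/-- The Fourier coefficient `f̂(α) = E_x[f(x)·(-1)^⟨α,x⟩]` of `f : F_2^n → ℝ`. -/
noncomputable def fc {n : ℕ} (f : (Fin n → ZMod 2) → ℝ) (α : Fin n → ZMod 2) : ℝ :=
  (∑ x : Fin n → ZMod 2, f x * (-1 : ℝ) ^ (∑ i, α i * x i : ZMod 2).val) / 2 ^ n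

/-- The character `x ↦ (-1)^⟨α,x⟩` of `F_2^n`. -/
noncomputable def chi {n : ℕ} (α x : Fin n → ZMod 2) : ℝ :=
  (-1 : ℝ) ^ (∑ i, α i * x i : ZMod 2).val

section Character

variable {n : ℕ}

lemma fc_eq_sum_chi (f : (Fin n → ZMod 2) → ℝ) (α : Fin n → ZMod 2) :
    fc f α = (∑ x, f x * chi α x) / 2 ^ n := rfl

lemma add_self_eq_zero_vec (x : Fin n → ZMod 2) : x + x = 0 :=
  funext fun i => CharTwo.add_self_eq_zero (x i)

lemma neg_one_pow_val_add (a b : ZMod 2) :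
    (-1 : ℝ) ^ (a + b).val = (-1) ^ a.val * (-1) ^ b.val := by
  rw [ZMod.val_add, ← pow_add, neg_one_pow_eq_pow_mod_two (n := a.val + b.val)]

lemma chi_comm (α x : Fin n → ZMod 2) : chi α x = chi x α := by
  simp [chi, mul_comm]

lemma chi_add_right (α x y : Fin n → ZMod 2) : chi α (x + y) = chi α x * chi α y := by
  simp only [chi, Pi.add_apply, mul_add, sum_add_distrib, neg_one_pow_val_add]

lemma chi_add_left (α β x : Fin n → ZMod 2) : chi (α + β) x = chi α x * chi β x := by
  simp only [chi_comm _ x, chi_add_right]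

@[simp] lemma chi_zero_left (x : Fin n → ZMod 2) : chi 0 x = 1 := by simp [chi]

@[simp] lemma chi_zero_right (x : Fin n → ZMod 2) : chi x 0 = 1 := by simp [chi]

lemma chi_eq_or (α x : Fin n → ZMod 2) : chi α x = 1 ∨ chi α x = -1 :=
  neg_one_pow_eq_or ℝ _

lemma chi_mul_self (α x : Fin n → ZMod 2) : chi α x * chi α x = 1 := by
  rcases chi_eq_or α x with h | h <;> simp [h]

lemma exists_chi_eq_neg_one {x : Fin n → ZMod 2} (hx : x ≠ 0) : ∃ α, chi α x = -1 := by
  obtain ⟨i, hi⟩ := Function.ne_iff.mp hx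
  have hxi : x i = 1 := by
    have h2 : ∀ a : ZMod 2, a ≠ 0 → a = 1 := by decide
    exact h2 _ hi
  refine ⟨Pi.single i 1, ?_⟩
  simp [chi, Pi.single_apply, hxi, ZMod.val_one]

lemma sum_chi_left (x : Fin n → ZMod 2) : ∑ α, chi α x = if x = 0 then 2 ^ n else 0 := by
  split_ifs with hx
  · subst hx
    simp [ZMod.card]
  · obtain ⟨β, hβ⟩ := exists_chi_eq_neg_one hx
    have h := Equiv.sum_comp (Equiv.addLeft β) fun α => chi α x
    simp only [Equiv.coe_addLeft, chi_add_left, hβ, ← mul_sum] at h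
    linarith

/-- Fourier inversion. -/
lemma sum_fc_mul_chi (f : (Fin n → ZMod 2) → ℝ) (x : Fin n → ZMod 2) :
    ∑ α, fc f α * chi α x = f x := by
  simp only [fc_eq_sum_chi, div_mul_eq_mul_div, sum_mul, ← sum_div, mul_assoc, ← chi_add_right]
  rw [sum_comm]
  simp only [← mul_sum, sum_chi_left]
  have h : ∀ y, y + x = 0 ↔ y = x := fun y => by
    rw [← add_left_inj x (b := y), add_self_eq_zero_vec]
  simp [h]

/-- The Fourier transform of an idempotent function is idempotent for convolution. -/
lemma sum_fc_mul_fc_add {f : (Fin n → ZMod 2) → ℝ} (hf : ∀ x, f x = 0 ∨ f x = 1)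
    (α : Fin n → ZMod 2) : ∑ β, fc f β * fc f (α + β) = fc f α := by
  have hff : ∀ x, f x * f x = f x := fun x => by rcases hf x with h | h <;> simp [h]
  calc ∑ β, fc f β * fc f (α + β)
      = (∑ β, ∑ x, f x * chi α x * (fc f β * chi β x)) / 2 ^ n := by
        rw [sum_div]
        refine sum_congr rfl fun β _ => ?_
        rw [fc_eq_sum_chi f (α + β), mul_div_assoc', mul_sum]
        congr 1
        refine sum_congr rfl fun x _ => ?_
        rw [chi_add_left]
        ring
    _ = fc f α := by
        rw [sum_comm, fc_eq_sum_chi f α]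
        congr 1
        refine sum_congr rfl fun x _ => ?_
        rw [← mul_sum, sum_fc_mul_chi, mul_right_comm, hff]

lemma fc_mul_one_add_chi (f : (Fin n → ZMod 2) → ℝ) (s : ℝ) (γ α : Fin n → ZMod 2) :
    fc (fun x => f x * (1 + s * chi γ x) / 2) α = (fc f α + s * fc f (α + γ)) / 2 := by
  simp only [fc_eq_sum_chi, chi_add_left]
  rw [mul_div_assoc', ← add_div, mul_sum, ← sum_add_distrib, div_right_comm, sum_div _ _ (2 : ℝ)]
  congr 1
  refine sum_congr rfl fun x _ => ?_
  ring

/-- A set of density `2^(-k)` all of whose Fourier coefficients are `0` or `±2^(-k)` is an affine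
subspace of codimension `k`. -/
lemma exists_affine_of_fc {k : ℕ} (hk : k ≤ n) {f : (Fin n → ZMod 2) → ℝ}
    (hf : ∀ x, f x = 0 ∨ f x = 1) (h0 : fc f 0 = 1 / 2 ^ k)
    (h : ∀ α, fc f α = 0 ∨ fc f α = 1 / 2 ^ k ∨ fc f α = -(1 / 2 ^ k)) :
    ∃ (a : Fin n → ZMod 2) (V : Submodule (ZMod 2) (Fin n → ZMod 2)),
      Module.finrank (ZMod 2) V = n - k ∧
      {x | f x = 1} = (a + ·) '' (V : Set (Fin n → ZMod 2)) := by
  classical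
  have habs : ∑ α, |fc f α| = 1 := by
    have hsq : ∀ α, |fc f α| = 2 ^ k * (fc f α * fc f (0 + α)) := fun α => by
      rcases h α with h | h | h <;> simp [h, abs_of_nonneg]
    rw [sum_congr rfl fun α _ => hsq α, ← mul_sum, sum_fc_mul_fc_add hf, h0]
    simp
  have hle : ∀ α x, fc f α * chi α x ≤ |fc f α| := fun α x => by
    rcases chi_eq_or α x with h | h
    · simpa [h] using le_abs_self _
    · simpa [h] using neg_le_abs _
  have hphase : ∀ x, f x = 1 ↔ ∀ α, fc f α * chi α x = |fc f α| := fun x => by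
    rw [← sum_fc_mul_chi f x, ← habs, sum_eq_sum_iff_of_le fun α _ => hle α x]
    simp
  have hadd : ∀ x y z, f x = 1 → f y = 1 → f z = 1 → f (x + y + z) = 1 := by
    intro x y z hx hy hz
    rw [hphase] at hx hy hz ⊢
    intro α
    by_cases hα : fc f α = 0
    · simp [hα]
    · have hxy : chi α x = chi α y := mul_left_cancel₀ hα ((hx α).trans (hy α).symm)
      rw [chi_add_right, chi_add_right, hxy, chi_mul_self, one_mul, hz]
  have hsum : ∑ x, f x = 2 ^ (n - k) := by
    have h1 : (∑ x, f x) / 2 ^ n = 1 / 2 ^ k := by rw [← h0, fc_eq_sum_chi]; simp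
    rw [pow_sub₀ _ two_ne_zero hk]
    field_simp at h1 ⊢
    linarith
  obtain ⟨a, ha⟩ : ∃ a, f a = 1 := by
    by_contra! hne
    have h1 : ∑ x, f x = 0 := sum_eq_zero fun x _ => (hf x).resolve_right (hne x)
    rw [hsum] at h1
    exact pow_ne_zero _ two_ne_zero h1
  let V : Submodule (ZMod 2) (Fin n → ZMod 2) :=
    { carrier := {v | f (a + v) = 1}
      zero_mem' := by simpa using ha
      add_mem' := by
        intro v w hv hw
        have h1 := hadd _ _ _ (hv : f (a + v) = 1) ha (hw : f (a + w) = 1)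
        have h2 : a + v + a + (a + w) = a + (v + w) + (a + a) := by abel
        rwa [h2, add_self_eq_zero_vec, add_zero] at h1
      smul_mem' := by
        intro c v hv
        have hc : c = 0 ∨ c = 1 := by revert c; decide
        rcases hc with rfl | rfl
        · simpa using ha
        · simpa using hv }
  have himage : {x | f x = 1} = (a + ·) '' (V : Set (Fin n → ZMod 2)) := by
    ext x
    constructor
    · intro hx
      refine ⟨-a + x, ?_, by simp⟩
      change f (a + (-a + x)) = 1
      simpa using hx
    · rintro ⟨v, hv, rfl⟩
      exact hv
  refine ⟨a, V, ?_, himage⟩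
  have hcard : Nat.card V = 2 ^ (n - k) := by
    have h1 : Nat.card V = {x | f x = 1}.ncard := by
      rw [himage, Set.ncard_image_of_injective _ (add_right_injective a)]
      rfl
    have h2 : ∑ x, f x = ((univ.filter fun x => f x = 1).card : ℝ) := by
      rw [card_filter]
      push_cast
      refine sum_congr rfl fun x _ => ?_
      rcases hf x with h | h <;> simp [h]
    rw [hsum] at h2
    rw [h1, Set.ncard_eq_toFinset_card', Set.toFinset_ofPred]
    exact_mod_cast h2.symm
  rw [Module.natCard_eq_pow_finrank (K := ZMod 2), Nat.card_zmod] at hcard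
  exact Nat.pow_right_injective le_rfl hcard

end Character

/-- In an elementary abelian `2`-group, an autocorrelation identity together with three negative
values having positive pairwise sums forces the support to be periodic away from the period. -/
lemma exists_period {G : Type*} [AddCommGroup G] [Fintype G] (hG : ∀ x : G, x + x = 0)
    {F : G → ℝ} (h0 : F 0 = 2) (hF : ∀ α, α ≠ 0 → F α = 0 ∨ F α = 1 ∨ F α = -1)
    (hconv : ∀ α, ∑ β, F β * F (α + β) = 8 * F α) (hsum : ∑ β, F β = 8)
    (hneg : ∀ α β, α ≠ β → F α = -1 → F β = -1 → F (α + β) = 1) :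
    ∃ γ, γ ≠ 0 ∧ F γ = 0 ∧ ∀ α, α ≠ 0 → α ≠ γ → F (α + γ) ^ 2 = F α ^ 2 := by
  classical
  have hcard : (univ.filter fun α => F α = -1).card = 3 := by
    have h1 : ∑ β, (F β * F β - F β) = 2 + 2 * ((univ.filter fun α => F α = -1).card : ℝ) := by
      rw [card_filter]
      push_cast
      have h2 : (2 : ℝ) = ∑ β : G, if β = 0 then 2 else 0 := by simp
      conv_rhs => rw [mul_sum]; arg 1; rw [h2]
      rw [← sum_add_distrib]
      refine sum_congr rfl fun β _ => ?_
      by_cases hβ : β = 0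
      · subst hβ; norm_num [h0]
      · rcases hF β hβ with h | h | h <;> norm_num [h, hβ]
    have h2 := hconv 0
    simp only [zero_add, h0] at h2
    rw [sum_sub_distrib, h2, hsum] at h1
    have h3 : ((univ.filter fun α => F α = -1).card : ℝ) = 3 := by linarith
    exact_mod_cast h3
  obtain ⟨a, b, c, hab, hac, hbc, hB⟩ := card_eq_three.mp hcard
  have hmem : ∀ x, F x = -1 ↔ x = a ∨ x = b ∨ x = c := fun x => by
    simpa using congrArg (x ∈ ·) hB
  have ha : F a = -1 := (hmem a).2 (by simp)
  have hb : F b = -1 := (hmem b).2 (by simp)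
  have hc : F c = -1 := (hmem c).2 (by simp)
  have hFab := hneg a b hab ha hb
  have hFac := hneg a c hac ha hc
  have hFbc := hneg b c hbc hb hc
  have hcancel : ∀ x y : G, x + y + y = x := fun x y => by rw [add_assoc, hG, add_zero]
  set γ := a + b + c with hγdef
  have hγc : γ + c = a + b := hcancel _ _
  have hγb : γ + b = a + c := by
    rw [hγdef, add_right_comm a b c, hcancel]
  have hγa : γ + a = b + c := by
    rw [hγdef, add_assoc a b c, add_comm a, hcancel]
  have hγ0 : γ ≠ 0 := by
    intro h
    rw [h, zero_add] at hγc
    rw [hγc, hFab] at hc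
    norm_num at hc
  have ne_of_F : ∀ {x y : G} {r s : ℝ}, F x = r → F y = s → r ≠ s → x ≠ y := by
    rintro x y r s rfl rfl h rfl
    exact h rfl
  have hzero : ∀ {x : G} {r : ℝ}, F x = r → r ≠ 2 → x ≠ 0 := fun hx hr => ne_of_F hx h0 hr
  have ha0 : a ≠ 0 := hzero ha (by norm_num)
  have hb0 : b ≠ 0 := hzero hb (by norm_num)
  have hc0 : c ≠ 0 := hzero hc (by norm_num)
  have hγne : ∀ {x y : G}, γ + x = y → y ≠ 0 → γ ≠ x := by
    rintro x y h hy rfl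
    exact hy (h.symm.trans (hG _))
  have hab0 : a + b ≠ 0 := hzero hFab (by norm_num)
  have hac0 : a + c ≠ 0 := hzero hFac (by norm_num)
  have hbc0 : b + c ≠ 0 := hzero hFbc (by norm_num)
  have hγab : γ + (a + b) = c := by rw [← hγc, ← add_assoc, hG, zero_add]
  have hγac : γ + (a + c) = b := by rw [← hγb, ← add_assoc, hG, zero_add]
  have hγbc : γ + (b + c) = a := by rw [← hγa, ← add_assoc, hG, zero_add]
  have hγ1 : F γ ≠ -1 := by
    rw [Ne, hmem]
    rintro (h | h | h)
    exacts [hγne hγa hbc0 h, hγne hγb hac0 h, hγne hγc hab0 h]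
  have hD : ∑ β, (F β - F (γ + β)) ^ 2 = 32 - 16 * F γ := by
    have h1 := hconv 0
    simp only [zero_add, h0] at h1
    have h2 : ∑ β, F (γ + β) * F (γ + β) = ∑ β, F β * F β :=
      Equiv.sum_comp (Equiv.addLeft γ) fun β => F β * F β
    have h3 : ∀ β, (F β - F (γ + β)) ^ 2 =
        F β * F β + F (γ + β) * F (γ + β) - 2 * (F β * F (γ + β)) := fun β => by ring
    simp only [h3, sum_sub_distrib, sum_add_distrib, ← mul_sum, h2, h1, hconv]
    ring
  let T : Finset G := {0, γ, a, b, c, a + b, a + c, b + c}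
  have hT : ∑ β ∈ T, (F β - F (γ + β)) ^ 2 = 2 * (2 - F γ) ^ 2 + 24 := by
    have nab : ∀ {x y : G}, F x = -1 → F y = 1 → x ≠ y := fun hx hy =>
      ne_of_F hx hy (by norm_num)
    rw [sum_insert, sum_insert, sum_insert, sum_insert, sum_insert, sum_insert, sum_insert,
      sum_singleton, add_zero, hG, hγa, hγb, hγc, hγab, hγac, hγbc, ha, hb, hc, hFab, hFac, hFbc,
      h0]
    · ring
    all_goals simp only [mem_insert, mem_singleton, not_or]
    · exact fun h => hab (add_right_cancel h)
    · exact ⟨fun h => hbc (add_left_cancel h),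
        fun h => hac (add_left_cancel ((add_comm b a).trans h))⟩
    · exact ⟨nab hc hFab, nab hc hFac, nab hc hFbc⟩
    · exact ⟨hbc, nab hb hFab, nab hb hFac, nab hb hFbc⟩
    · exact ⟨hab, hac, nab ha hFab, nab ha hFac, nab ha hFbc⟩
    · exact ⟨hγne hγa hbc0, hγne hγb hac0, hγne hγc hab0, hγne hγab hc0, hγne hγac hb0,
        hγne hγbc ha0⟩
    · exact ⟨hγ0.symm, ha0.symm, hb0.symm, hc0.symm, hab0.symm, hac0.symm, hbc0.symm⟩
  have hle : ∑ β ∈ T, (F β - F (γ + β)) ^ 2 ≤ ∑ β, (F β - F (γ + β)) ^ 2 :=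
    sum_le_sum_of_subset_of_nonneg (subset_univ _) fun _ _ _ => sq_nonneg _
  have hFγ : F γ = 0 := by
    rw [hT, hD] at hle
    rcases hF γ hγ0 with h | h | h
    · exact h
    · norm_num [h] at hle
    · exact absurd h hγ1
  refine ⟨γ, hγ0, hFγ, fun α hα0 hαγ => ?_⟩
  rw [add_comm]
  by_cases hα : α ∈ T
  · simp only [T, mem_insert, mem_singleton] at hα
    rcases hα with rfl | h | h | h | h | h | h | h
    · exact absurd rfl hα0
    · exact absurd h hαγ
    all_goals
      rw [h]
      norm_num [hγa, hγb, hγc, hγab, hγac, hγbc, ha, hb, hc, hFab, hFac, hFbc]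
  · have h1 := sum_le_sum_of_subset_of_nonneg (subset_univ (insert α T))
      fun β _ _ => sq_nonneg (F β - F (γ + β))
    rw [sum_insert hα, hT, hD, hFγ] at h1
    have h2 : F α - F (γ + α) = 0 := by
      refine pow_eq_zero_iff two_ne_zero |>.mp (le_antisymm ?_ (sq_nonneg _))
      linarith
    rw [sub_eq_zero.mp h2]

/-- The k = 3 case of the small-k lemma. -/
theorem stmt_13 {n : ℕ} (hn : 3 ≤ n) (f : (Fin n → ZMod 2) → ℝ)
    (hf : ∀ x, f x = 0 ∨ f x = 1)
    (h0 : fc f 0 = 1 / 2 ^ (3 - 1))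
    (h : ∀ α : Fin n → ZMod 2, α ≠ 0 →
      fc f α = 0 ∨ fc f α = 1 / 2 ^ 3 ∨ fc f α = -(1 / 2 ^ 3)) :
    ∃ (a b : Fin n → ZMod 2) (V W : Submodule (ZMod 2) (Fin n → ZMod 2)),
      Module.finrank (ZMod 2) V = n - 3 ∧ Module.finrank (ZMod 2) W = n - 3 ∧
      Disjoint ((a + ·) '' (V : Set (Fin n → ZMod 2)))
        ((b + ·) '' (W : Set (Fin n → ZMod 2))) ∧
      {x | f x = 1} =
        (a + ·) '' (V : Set (Fin n → ZMod 2)) ∪ (b + ·) '' (W : Set (Fin n → ZMod 2)) := by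
  have h0' : fc f 0 = 1 / 4 := by rw [h0]; norm_num
  obtain ⟨γ, hγ0, hγ, hper⟩ : ∃ γ, γ ≠ 0 ∧ fc f γ = 0 ∧
      ∀ α, α ≠ 0 → α ≠ γ → fc f (α + γ) ^ 2 = fc f α ^ 2 := by
    obtain ⟨x₀, hx₀⟩ : ∃ x₀, f x₀ = 1 := by
      by_contra! hne
      have h1 : fc f 0 = 0 := by
        simp [fc_eq_sum_chi, fun x => (hf x).resolve_right (hne x)]
      linarith
    have hchi : ∀ α, (chi α x₀) ^ 2 = 1 := fun α => by rw [sq, chi_mul_self]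
    obtain ⟨γ, hγ0, hγ, hper⟩ : ∃ γ, γ ≠ 0 ∧ 8 * (fc f γ * chi γ x₀) = 0 ∧ ∀ α, α ≠ 0 → α ≠ γ →
        (8 * (fc f (α + γ) * chi (α + γ) x₀)) ^ 2 = (8 * (fc f α * chi α x₀)) ^ 2 := by
      refine exists_period add_self_eq_zero_vec (F := fun α => 8 * (fc f α * chi α x₀))
        (by norm_num [h0']) ?_ ?_ ?_ ?_
      · intro α hα
        rcases h α hα with h | h | h <;> rcases chi_eq_or α x₀ with h' | h' <;> norm_num [h, h']
      · intro α
        rw [← sum_fc_mul_fc_add hf α, sum_mul, mul_sum, mul_sum]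
        refine sum_congr rfl fun β _ => ?_
        rw [chi_add_left]
        linear_combination 64 * fc f β * fc f (α + β) * chi α x₀ * hchi β
      · rw [← mul_sum, sum_fc_mul_chi, hx₀, mul_one]
      · intro α β hαβ hα hβ
        have hpos : 0 < ∑ x, f x * ((1 + chi α x * chi α x₀) * (1 + chi β x * chi β x₀)) := by
          refine sum_pos' (fun x _ => ?_) ⟨x₀, mem_univ _, by norm_num [chi_mul_self, hx₀]⟩
          rw [← chi_add_right, ← chi_add_right]
          rcases hf x with h | h <;> rcases chi_eq_or α (x + x₀) with h' | h' <;>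
            rcases chi_eq_or β (x + x₀) with h'' | h'' <;> norm_num [h, h', h'']
        have hexp : (∑ x, f x * ((1 + chi α x * chi α x₀) * (1 + chi β x * chi β x₀))) / 2 ^ n =
            fc f 0 + fc f α * chi α x₀ + fc f β * chi β x₀ + fc f (α + β) * chi (α + β) x₀ := by
          simp only [fc_eq_sum_chi, div_mul_eq_mul_div, ← add_div, sum_mul, ← sum_add_distrib]
          congr 1
          refine sum_congr rfl fun x _ => ?_
          simp only [chi_add_left, chi_zero_left]
          ring
        have hpos' : 0 < fc f (α + β) * chi (α + β) x₀ := by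
          have h1 := div_pos hpos (pow_pos (two_pos (α := ℝ)) n)
          rw [hexp] at h1
          linarith
        have hne : α + β ≠ 0 := fun h1 => hαβ <| by
          rw [← add_left_inj β, h1, add_self_eq_zero_vec]
        rcases h _ hne with h | h | h <;> rcases chi_eq_or (α + β) x₀ with h' | h' <;>
          first | (norm_num [h, h'] at hpos'; done) | norm_num [h, h']
    refine ⟨γ, hγ0, ?_, fun α h1 h2 => ?_⟩
    · rcases chi_eq_or γ x₀ with h | h <;> simpa [h] using hγ
    · have h3 := hper α h1 h2
      simp only [mul_pow, hchi] at h3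
      linarith
  have hpiece : ∀ s : ℝ, s = 1 ∨ s = -1 →
      ∃ (a : Fin n → ZMod 2) (V : Submodule (ZMod 2) (Fin n → ZMod 2)),
        Module.finrank (ZMod 2) V = n - 3 ∧
        {x | f x * (1 + s * chi γ x) / 2 = 1} = (a + ·) '' (V : Set (Fin n → ZMod 2)) := by
    intro s hs
    refine exists_affine_of_fc hn (f := fun x => f x * (1 + s * chi γ x) / 2) (fun x => ?_) ?_
      fun α => ?_
    · rcases hf x with h | h <;> rcases chi_eq_or γ x with h' | h' <;>
        rcases hs with rfl | rfl <;> norm_num [h, h']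
    · rw [fc_mul_one_add_chi, zero_add, hγ, h0']
      norm_num
    · rw [fc_mul_one_add_chi]
      by_cases hα0 : α = 0
      · subst hα0
        rw [zero_add, hγ, h0']
        norm_num
      by_cases hαγ : α = γ
      · subst hαγ
        rw [add_self_eq_zero_vec, hγ, h0']
        rcases hs with rfl | rfl <;> norm_num
      rcases sq_eq_sq_iff_eq_or_eq_neg.mp (hper α hα0 hαγ) with h1 | h1 <;>
        rcases h α hα0 with h2 | h2 | h2 <;> rcases hs with rfl | rfl <;> norm_num [h1, h2]
  obtain ⟨a, V, hV, haV⟩ := hpiece 1 (by simp)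
  obtain ⟨b, W, hW, hbW⟩ := hpiece (-1) (by simp)
  refine ⟨a, b, V, W, hV, hW, ?_, ?_⟩
  · rw [← haV, ← hbW, Set.disjoint_left]
    intro x hx hx'
    simp only [Set.mem_ofPred_eq] at hx hx'
    rcases hf x with h | h <;> rw [h] at hx hx' <;> linarith
  · rw [← haV, ← hbW]
    ext x
    simp only [Set.mem_ofPred_eq, Set.mem_union]
    rcases hf x with h | h <;> rcases chi_eq_or γ x with h' | h' <;> norm_num [h, h']
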